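/- (Existence part of the classification of constant multiplicative 2-forms.) Let c : W₀ × W₂ → ℝ and b : W₁ × W₁ → ℝ be bilinear maps satisfying c(∂₁ x, a) = b(∂₂ a, x) + b(x, ∂₂ a) for all a ∈ W₂ and x ∈ W₁. Define the bilinear form ω on V₂ by ω((a,x,y,m),(a',x',y',m')) = −b(∂₂a, ∂₂a') + b(∂₂a, x') + b(y', ∂₂a) − c(m', a) − b(∂₂a', x) + b(x', x) − b(x, x') − b(y', x) − b(y, ∂₂a') + b(y, x') + c(m, a'). Then ω is alternating, normalized, and multiplicative, and its components satisfy C₄₁ = c and C₃₂ = b. -/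

import Mathlib

/-!
A point `(a, x, y, m)` of `V₂` is a 2-simplex with vertices `0, 1, 2`: its edges `01` and `02` are
`x` and `y`, its edge `12` is `∂₂a + y - x`, and `m` sits at the vertex `0`. In these coordinates
`ω(p, q) = κ(p, q) - κ(q, p) - b(∂₂a, ∂₂a')` with
`κ(p, q) = c(m, a') + b(∂₂a + y - x, x') - b(y, ∂₂a')`.

In the alternating face sum of `κ` the compatibility condition leaves a part symmetric in the two
simplices, which `κ(p, q) - κ(q, p)` discards, and values of `b` on the image of `∂₂`. There `b` is
skew because `∂₁ ∘ ∂₂ = 0`, and the correction `-b(∂₂a, ∂₂a')` compensates these values since the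
fillings of the four faces satisfy `a₃ + a₁ = a₀ + a₂`.
-/

/-- The constant 2-form on `V₂ = W₂ × W₁ × W₁ × W₀` built from a bilinear pairing
`c : W₀ × W₂ → ℝ` and a bilinear form `b` on `W₁`:
`ω((a,x,y,m),(a',x',y',m')) = −b(∂₂a, ∂₂a') + b(∂₂a, x') + b(y', ∂₂a) − c(m', a)
 − b(∂₂a', x) + b(x', x) − b(x, x') − b(y', x) − b(y, ∂₂a') + b(y, x') + c(m, a')`. -/
def constantForm
    {W0 W1 W2 : Type*}
    [AddCommGroup W0] [Module ℝ W0]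
    [AddCommGroup W1] [Module ℝ W1]
    [AddCommGroup W2] [Module ℝ W2]
    (d2 : W2 →ₗ[ℝ] W1)
    (c : W0 →ₗ[ℝ] W2 →ₗ[ℝ] ℝ) (b : W1 →ₗ[ℝ] W1 →ₗ[ℝ] ℝ)
    (p q : W2 × W1 × W1 × W0) : ℝ :=
  -(b (d2 p.1) (d2 q.1)) + b (d2 p.1) q.2.1 + b q.2.2.1 (d2 p.1) - c q.2.2.2 p.1
    - b (d2 q.1) p.2.1 + b q.2.1 p.2.1 - b p.2.1 q.2.1 - b q.2.2.1 p.2.1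
    - b p.2.2.1 (d2 q.1) + b p.2.2.1 q.2.1 + c p.2.2.2 q.1

namespace ThreeTermComplex

section SkewForms

variable {R M N : Type*} [CommRing R] [AddCommGroup M] [Module R M] [AddCommGroup N] [Module R N]
  {β : M →ₗ[R] M →ₗ[R] N}

lemma isAlt_of_skew (hN : IsSMulRegular N (2 : ℕ)) (hβ : ∀ a a', β a a' = -β a' a) : β.IsAlt :=
  fun a => hN (by simpa only [two_nsmul, smul_zero] using eq_neg_iff_add_eq_zero.mp (hβ a a))

lemma alternating_sum_eq_of_skew (hβ : ∀ a a', β a a' = -β a' a) {a₀ a₁ a₂ a₃ a₀' a₁' a₂' a₃' : M}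
    (h : a₃ + a₁ = a₀ + a₂) (h' : a₃' + a₁' = a₀' + a₂') :
    β a₀ a₀' - β a₁ a₁' + β a₂ a₂' - β a₃ a₃'
      = (β a₁ a₃' - β a₂ a₀') - (β a₁' a₃ - β a₂' a₀) := by
  have hsum : β (a₃ + a₁) (a₃' + a₁') = β (a₀ + a₂) (a₀' + a₂') := by rw [h, h']
  simp only [map_add, LinearMap.add_apply] at hsum
  rw [hβ a₁' a₃, hβ a₂' a₀]
  linear_combination (norm := abel) -hsum

end SkewForms

section Forms

/-- The space `V₁` of 1-simplices `(x, m)`. -/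
abbrev OneSimplex (W₁ W₀ : Type*) := W₁ × W₀

/-- The space `V₂` of 2-simplices `(a, x, y, m)`. -/
abbrev TwoSimplex (W₂ W₁ W₀ : Type*) := W₂ × W₁ × W₁ × W₀

/-- The space `V₃` of 3-simplices `(a₀, a₁, a₂, x, y, z, m)`; `aᵢ` is the filling of the `i`-th
face. -/
abbrev ThreeSimplex (W₂ W₁ W₀ : Type*) := W₂ × W₂ × W₂ × W₁ × W₁ × W₁ × W₀

variable {R N W₀ W₁ W₂ : Type*} [CommRing R] [AddCommGroup N] [Module R N]
  [AddCommGroup W₀] [Module R W₀] [AddCommGroup W₁] [Module R W₁] [AddCommGroup W₂] [Module R W₂]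

/-- The face maps `f₀, f₁, f₂, f₃ : V₃ → V₂`. -/
def face (d₂ : W₂ →ₗ[R] W₁) (d₁ : W₁ →ₗ[R] W₀) :
    Fin 4 → ThreeSimplex W₂ W₁ W₀ → TwoSimplex W₂ W₁ W₀
  | 0, (a₀, _, _, x, y, _, m) => (a₀, x, y, m)
  | 1, (_, a₁, _, x, _, z, m) => (a₁, x, z, m)
  | 2, (_, _, a₂, _, y, z, m) => (a₂, y, z, m)
  | 3, (a₀, a₁, a₂, x, y, z, m) => (a₂ - a₁ + a₀, d₂ a₀ + y - x, d₂ a₁ + z - x, m - d₁ x)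

/-- The degeneracy maps `σ₀, σ₁ : V₁ → V₂`. -/
def degeneracy : Fin 2 → OneSimplex W₁ W₀ → TwoSimplex W₂ W₁ W₀
  | 0, (x, m) => (0, x, x, m)
  | 1, (x, m) => (0, 0, x, m)

/-- The alternating sum of the pullbacks of a bilinear form on `V₂` along the face maps; its
vanishing is multiplicativity. -/
def faceSum (d₂ : W₂ →ₗ[R] W₁) (d₁ : W₁ →ₗ[R] W₀)
    (ω : TwoSimplex W₂ W₁ W₀ →ₗ[R] TwoSimplex W₂ W₁ W₀ →ₗ[R] N) (u v : ThreeSimplex W₂ W₁ W₀) : N :=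
  ω (face d₂ d₁ 0 u) (face d₂ d₁ 0 v) - ω (face d₂ d₁ 1 u) (face d₂ d₁ 1 v)
    + ω (face d₂ d₁ 2 u) (face d₂ d₁ 2 v) - ω (face d₂ d₁ 3 u) (face d₂ d₁ 3 v)

/-- Multiplicativity of a bilinear form on `V₂`. -/
def IsMultiplicative (d₂ : W₂ →ₗ[R] W₁) (d₁ : W₁ →ₗ[R] W₀)
    (ω : TwoSimplex W₂ W₁ W₀ →ₗ[R] TwoSimplex W₂ W₁ W₀ →ₗ[R] N) : Prop :=
  ∀ u v, faceSum d₂ d₁ ω u v = 0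

/-- Normalization of a bilinear form on `V₂`: it vanishes on each space of degenerate simplices. -/
def IsNormalized (ω : TwoSimplex W₂ W₁ W₀ →ₗ[R] TwoSimplex W₂ W₁ W₀ →ₗ[R] N) : Prop :=
  ∀ i v v', ω (degeneracy i v) (degeneracy i v') = 0

lemma faceSum_sub (d₂ : W₂ →ₗ[R] W₁) (d₁ : W₁ →ₗ[R] W₀)
    (ω η : TwoSimplex W₂ W₁ W₀ →ₗ[R] TwoSimplex W₂ W₁ W₀ →ₗ[R] N) (u v : ThreeSimplex W₂ W₁ W₀) :
    faceSum d₂ d₁ (ω - η) u v = faceSum d₂ d₁ ω u v - faceSum d₂ d₁ η u v := by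
  simp only [faceSum, LinearMap.sub_apply]
  abel

lemma faceSum_flip (d₂ : W₂ →ₗ[R] W₁) (d₁ : W₁ →ₗ[R] W₀)
    (ω : TwoSimplex W₂ W₁ W₀ →ₗ[R] TwoSimplex W₂ W₁ W₀ →ₗ[R] N) (u v : ThreeSimplex W₂ W₁ W₀) :
    faceSum d₂ d₁ ω.flip u v = faceSum d₂ d₁ ω v u :=
  rfl

/-- The coordinate `a` of a 2-simplex `(a, x, y, m)`. -/
def filling : TwoSimplex W₂ W₁ W₀ →ₗ[R] W₂ :=
  .fst R W₂ (W₁ × W₁ × W₀)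

/-- The coordinate `x` of a 2-simplex `(a, x, y, m)`. -/
def edge₀₁ : TwoSimplex W₂ W₁ W₀ →ₗ[R] W₁ :=
  .fst R W₁ (W₁ × W₀) ∘ₗ .snd R W₂ (W₁ × W₁ × W₀)

/-- The coordinate `y` of a 2-simplex `(a, x, y, m)`. -/
def edge₀₂ : TwoSimplex W₂ W₁ W₀ →ₗ[R] W₁ :=
  .fst R W₁ W₀ ∘ₗ .snd R W₁ (W₁ × W₀) ∘ₗ .snd R W₂ (W₁ × W₁ × W₀)

/-- The coordinate `m` of a 2-simplex `(a, x, y, m)`. -/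
def vertex₀ : TwoSimplex W₂ W₁ W₀ →ₗ[R] W₀ :=
  .snd R W₁ W₀ ∘ₗ .snd R W₁ (W₁ × W₀) ∘ₗ .snd R W₂ (W₁ × W₁ × W₀)

/-- The third edge of a 2-simplex, determined by the other two and the filling. -/
def edge₁₂ (d₂ : W₂ →ₗ[R] W₁) : TwoSimplex W₂ W₁ W₀ →ₗ[R] W₁ :=
  d₂ ∘ₗ filling + edge₀₂ - edge₀₁

/-- The form `κ` of which `ω` is, up to a term on the fillings, the antisymmetrization. The first
two terms are cup products: `c` pairs a vertex with a filling, `b` pairs a back edge with a front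
edge. The last one corrects the failure of the cup product to commute. -/
def cupForm (d₂ : W₂ →ₗ[R] W₁) (c : W₀ →ₗ[R] W₂ →ₗ[R] N) (b : W₁ →ₗ[R] W₁ →ₗ[R] N) :
    TwoSimplex W₂ W₁ W₀ →ₗ[R] TwoSimplex W₂ W₁ W₀ →ₗ[R] N :=
  c.compl₁₂ vertex₀ filling + b.compl₁₂ (edge₁₂ d₂) edge₀₁ - b.compl₁₂ edge₀₂ (d₂ ∘ₗ filling)

/-- The form `(p, q) ↦ b(∂₂a, ∂₂a')` on the fillings of two 2-simplices. -/
def fillingForm (d₂ : W₂ →ₗ[R] W₁) (b : W₁ →ₗ[R] W₁ →ₗ[R] N) :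
    TwoSimplex W₂ W₁ W₀ →ₗ[R] TwoSimplex W₂ W₁ W₀ →ₗ[R] N :=
  (b.compl₁₂ d₂ d₂).compl₁₂ filling filling

/-- The form `ω` as a bundled bilinear map, with coefficients in an arbitrary module. -/
def multiplicativeForm (d₂ : W₂ →ₗ[R] W₁) (c : W₀ →ₗ[R] W₂ →ₗ[R] N) (b : W₁ →ₗ[R] W₁ →ₗ[R] N) :
    TwoSimplex W₂ W₁ W₀ →ₗ[R] TwoSimplex W₂ W₁ W₀ →ₗ[R] N :=
  cupForm d₂ c b - (cupForm d₂ c b).flip - fillingForm d₂ b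

variable (d₂ : W₂ →ₗ[R] W₁) (d₁ : W₁ →ₗ[R] W₀)
  (c : W₀ →ₗ[R] W₂ →ₗ[R] N) (b : W₁ →ₗ[R] W₁ →ₗ[R] N)

lemma cupForm_apply (a a' : W₂) (x y x' y' : W₁) (m m' : W₀) :
    cupForm d₂ c b (a, x, y, m) (a', x', y', m')
      = c m a' + b (d₂ a + y - x) x' - b y (d₂ a') :=
  rfl

lemma multiplicativeForm_apply (p q : TwoSimplex W₂ W₁ W₀) :
    multiplicativeForm d₂ c b p q
      = cupForm d₂ c b p q - cupForm d₂ c b q p - b (d₂ p.1) (d₂ q.1) :=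
  rfl

lemma isNormalized_multiplicativeForm : IsNormalized (multiplicativeForm d₂ c b) := by
  rintro i ⟨x, m⟩ ⟨x', m'⟩
  fin_cases i <;> simp [degeneracy, multiplicativeForm_apply, cupForm_apply]

lemma multiplicativeForm_vertex_filling (m : W₀) (a : W₂) :
    multiplicativeForm d₂ c b (0, 0, 0, m) (a, 0, 0, 0) = c m a := by
  simp [multiplicativeForm_apply, cupForm_apply]

lemma multiplicativeForm_edge_edge (x x' : W₁) :
    multiplicativeForm d₂ c b (0, 0, x, 0) (0, x', 0, 0) = b x x' := by
  simp [multiplicativeForm_apply, cupForm_apply]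

variable {d₂ d₁ c b}

lemma map_boundary_boundary_eq_neg (hd : ∀ a, d₁ (d₂ a) = 0)
    (hcb : ∀ a x, c (d₁ x) a = b (d₂ a) x + b x (d₂ a)) (a a' : W₂) :
    b (d₂ a) (d₂ a') = -b (d₂ a') (d₂ a) := by
  have h := hcb a (d₂ a')
  rw [hd, map_zero, LinearMap.zero_apply] at h
  exact eq_neg_of_add_eq_zero_left h.symm

lemma isAlt_multiplicativeForm (hb : (b.compl₁₂ d₂ d₂).IsAlt) :
    (multiplicativeForm d₂ c b).IsAlt := by
  intro p
  have hself : b (d₂ p.1) (d₂ p.1) = 0 := hb p.1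
  rw [multiplicativeForm_apply, hself, sub_self, sub_zero]

lemma faceSum_cupForm (hcb : ∀ a x, c (d₁ x) a = b (d₂ a) x + b x (d₂ a))
    (a₀ a₁ a₂ a₀' a₁' a₂' : W₂) (x y z x' y' z' : W₁) (m m' : W₀) :
    faceSum d₂ d₁ (cupForm d₂ c b) (a₀, a₁, a₂, x, y, z, m) (a₀', a₁', a₂', x', y', z', m')
      = b (d₂ (a₂ - a₁ + a₀)) x' + b (d₂ (a₂' - a₁' + a₀')) x
        + b (d₂ a₁) (d₂ (a₂' - a₁' + a₀')) - b (d₂ a₂) (d₂ a₀') := by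
  simp only [faceSum, face, cupForm_apply, map_add, map_sub, LinearMap.add_apply,
    LinearMap.sub_apply, hcb]
  abel

lemma isMultiplicative_multiplicativeForm
    (hcb : ∀ a x, c (d₁ x) a = b (d₂ a) x + b x (d₂ a))
    (hskew : ∀ a a', b (d₂ a) (d₂ a') = -b (d₂ a') (d₂ a)) :
    IsMultiplicative d₂ d₁ (multiplicativeForm d₂ c b) := by
  rintro ⟨a₀, a₁, a₂, x, y, z, m⟩ ⟨a₀', a₁', a₂', x', y', z', m'⟩
  have hcycle (a₀ a₁ a₂ : W₂) : a₂ - a₁ + a₀ + a₁ = a₀ + a₂ := by abel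
  have hfilling :
      faceSum d₂ d₁ (fillingForm d₂ b) (a₀, a₁, a₂, x, y, z, m) (a₀', a₁', a₂', x', y', z', m')
        = (b (d₂ a₁) (d₂ (a₂' - a₁' + a₀')) - b (d₂ a₂) (d₂ a₀'))
          - (b (d₂ a₁') (d₂ (a₂ - a₁ + a₀)) - b (d₂ a₂') (d₂ a₀)) :=
    alternating_sum_eq_of_skew (β := b.compl₁₂ d₂ d₂) hskew (hcycle a₀ a₁ a₂)
      (hcycle a₀' a₁' a₂')
  rw [multiplicativeForm, faceSum_sub, faceSum_sub, faceSum_flip, faceSum_cupForm hcb,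
    faceSum_cupForm hcb, hfilling]
  abel

end Forms

lemma constantForm_eq_multiplicativeForm {W₀ W₁ W₂ : Type*} [AddCommGroup W₀] [Module ℝ W₀]
    [AddCommGroup W₁] [Module ℝ W₁] [AddCommGroup W₂] [Module ℝ W₂] (d₂ : W₂ →ₗ[ℝ] W₁)
    (c : W₀ →ₗ[ℝ] W₂ →ₗ[ℝ] ℝ) (b : W₁ →ₗ[ℝ] W₁ →ₗ[ℝ] ℝ) (p q : TwoSimplex W₂ W₁ W₀) :
    constantForm d₂ c b p q = multiplicativeForm d₂ c b p q := by
  obtain ⟨a, x, y, m⟩ := p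
  obtain ⟨a', x', y', m'⟩ := q
  simp only [constantForm, multiplicativeForm_apply, cupForm_apply, map_add, map_sub,
    LinearMap.add_apply, LinearMap.sub_apply]
  ring

end ThreeTermComplex

open ThreeTermComplex

theorem stmt_6_general {R N W₀ W₁ W₂ : Type*} [CommRing R] [AddCommGroup N] [Module R N]
    [AddCommGroup W₀] [Module R W₀] [AddCommGroup W₁] [Module R W₁] [AddCommGroup W₂] [Module R W₂]
    (hN : IsSMulRegular N (2 : ℕ)) (d₂ : W₂ →ₗ[R] W₁) (d₁ : W₁ →ₗ[R] W₀) (hd : ∀ a, d₁ (d₂ a) = 0)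
    (c : W₀ →ₗ[R] W₂ →ₗ[R] N) (b : W₁ →ₗ[R] W₁ →ₗ[R] N)
    (hcb : ∀ a x, c (d₁ x) a = b (d₂ a) x + b x (d₂ a)) :
    (multiplicativeForm d₂ c b).IsAlt
    ∧ IsNormalized (multiplicativeForm d₂ c b)
    ∧ IsMultiplicative d₂ d₁ (multiplicativeForm d₂ c b)
    ∧ (∀ m a, multiplicativeForm d₂ c b (0, 0, 0, m) (a, 0, 0, 0) = c m a)
    ∧ (∀ x x', multiplicativeForm d₂ c b (0, 0, x, 0) (0, x', 0, 0) = b x x') :=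
  have hskew := map_boundary_boundary_eq_neg hd hcb
  ⟨isAlt_multiplicativeForm (isAlt_of_skew hN hskew), isNormalized_multiplicativeForm d₂ c b,
    isMultiplicative_multiplicativeForm hcb hskew, multiplicativeForm_vertex_filling d₂ c b,
    multiplicativeForm_edge_edge d₂ c b⟩

/-- existence part of the classification of constant multiplicative
2-forms: if `c(∂₁ x, a) = b(∂₂ a, x) + b(x, ∂₂ a)` for all `a, x`, then the form
`constantForm d2 c b` is alternating, normalized, and multiplicative, and its
components satisfy `C₄₁ = c` and `C₃₂ = b`. -/
theorem stmt_6
    (W0 W1 W2 : Type*)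
    [AddCommGroup W0] [Module ℝ W0]
    [AddCommGroup W1] [Module ℝ W1]
    [AddCommGroup W2] [Module ℝ W2]
    (d2 : W2 →ₗ[ℝ] W1) (d1 : W1 →ₗ[ℝ] W0)
    (hd : ∀ a : W2, d1 (d2 a) = 0)
    (c : W0 →ₗ[ℝ] W2 →ₗ[ℝ] ℝ) (b : W1 →ₗ[ℝ] W1 →ₗ[ℝ] ℝ)
    (hcb : ∀ (a : W2) (x : W1), c (d1 x) a = b (d2 a) x + b x (d2 a)) :
    (∀ v, constantForm d2 c b v v = 0)
    ∧ (∀ (x x' : W1) (m m' : W0),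
        constantForm d2 c b (0, x, x, m) (0, x', x', m') = 0
        ∧ constantForm d2 c b (0, 0, x, m) (0, 0, x', m') = 0)
    ∧ (∀ (a b' c' : W2) (x y z : W1) (m : W0)
        (a' b'' c'' : W2) (x' y' z' : W1) (m' : W0),
      constantForm d2 c b (a, x, y, m) (a', x', y', m')
      - constantForm d2 c b (b', x, z, m) (b'', x', z', m')
      + constantForm d2 c b (c', y, z, m) (c'', y', z', m')
      - constantForm d2 c b (c' - b' + a, d2 a + y - x, d2 b' + z - x, m - d1 x)
          (c'' - b'' + a', d2 a' + y' - x', d2 b'' + z' - x', m' - d1 x') = 0)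
    ∧ (∀ (m : W0) (a : W2), constantForm d2 c b (0, 0, 0, m) (a, 0, 0, 0) = c m a)
    ∧ (∀ x x' : W1, constantForm d2 c b (0, 0, x, 0) (0, x', 0, 0) = b x x') := by
  simp only [constantForm_eq_multiplicativeForm]
  obtain ⟨halt, hnormalized, hmultiplicative, hvertex, hedge⟩ :=
    stmt_6_general (IsSMulRegular.of_ne_zero two_ne_zero) d2 d1 hd c b hcb
  exact ⟨halt, fun x x' m m' => ⟨hnormalized 0 (x, m) (x', m'), hnormalized 1 (x, m) (x', m')⟩,
    fun a b' c' x y z m a' b'' c'' x' y' z' m' =>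
      hmultiplicative (a, b', c', x, y, z, m) (a', b'', c'', x', y', z', m'),
    hvertex, hedge⟩
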